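/- arXiv:1003.4328 — 2 statements merged into one kernel-verified Lean document; each statement's English description precedes it below -/
import Mathlib

section
/- Let U, X₁, X₂, Y₁, Y₂ be finite-valued random variables on a common probability space such that U is conditionally independent of the pair (Y₁,Y₂) given (X₁,X₂) (Markov chain U − (X₁,X₂) − (Y₁,Y₂)). If I(X₁;Y₁|(X₂,U)) ≤ I(X₁;Y₂|(X₂,U)) and I(Y₂;(X₁,X₂)) ≤ I(Y₁;(X₁,X₂)) (the 'very strong interference' conditions instantiated at this distribution), then I(Y₁;(X₂,U)) ≥ I(Y₂;(X₂,U)) (the 'better cognitive decoding' condition). -/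
/-!
Two expansions of `I(Yᵢ; X₁,X₂,U)` by the chain rule give
`I(Yᵢ; X₂,U) = I(Yᵢ; X₁,X₂) + I(U; Yᵢ | X₁,X₂) - I(X₁; Yᵢ | X₂,U)`. The two interference conditions
compare the first and the last terms for `i = 1` and `i = 2`. As for the middle ones,
`I(U; Y₁ | X₁,X₂) ≥ 0`, and `I(U; Y₂ | X₁,X₂) ≤ I(U; Y₁,Y₂ | X₁,X₂) = 0` by the chain rule once more
and the Markov condition. The chain rules are linear identities between joint entropies, up to the
order of the components of a tuple (`ent_congr`); the only inequality is the nonnegativity of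
conditional mutual information (`cmi_nonneg`), which follows from `log t ≤ t - 1`.
-/

open BigOperators Finset

namespace CIFC

/-- Probability that a finite-valued random variable `X` on a finite sample space with
probability mass function `μ` takes the value `x`. -/
noncomputable def pr {Ω α : Type*} [Fintype Ω] [DecidableEq α]
    (μ : Ω → ℝ) (X : Ω → α) (x : α) : ℝ :=
  ∑ ω : Ω, if X ω = x then μ ω else 0

/-- Shannon entropy `H(X)` of a finite-valued random variable. -/
noncomputable def ent {Ω α : Type*} [Fintype Ω] [Fintype α] [DecidableEq α]
    (μ : Ω → ℝ) (X : Ω → α) : ℝ :=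
  -∑ x : α, pr μ X x * Real.log (pr μ X x)

/-- Mutual information `I(X;Y)`. -/
noncomputable def mi {Ω α β : Type*} [Fintype Ω] [Fintype α] [DecidableEq α]
    [Fintype β] [DecidableEq β] (μ : Ω → ℝ) (X : Ω → α) (Y : Ω → β) : ℝ :=
  ent μ X + ent μ Y - ent μ (fun ω => (X ω, Y ω))

/-- Conditional mutual information `I(X;Y|Z)`. -/
noncomputable def cmi {Ω α β γ : Type*} [Fintype Ω] [Fintype α] [DecidableEq α]
    [Fintype β] [DecidableEq β] [Fintype γ] [DecidableEq γ]
    (μ : Ω → ℝ) (X : Ω → α) (Y : Ω → β) (Z : Ω → γ) : ℝ :=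
  ent μ (fun ω => (X ω, Z ω)) + ent μ (fun ω => (Y ω, Z ω))
    - ent μ (fun ω => (X ω, Y ω, Z ω)) - ent μ Z

/-- Conditional entropy `H(X|Y)`. -/
noncomputable def condEnt {Ω α β : Type*} [Fintype Ω] [Fintype α] [DecidableEq α]
    [Fintype β] [DecidableEq β] (μ : Ω → ℝ) (X : Ω → α) (Y : Ω → β) : ℝ :=
  ent μ (fun ω => (X ω, Y ω)) - ent μ Y

/-- `μ` is a probability mass function on the finite sample space `Ω`. -/
def IsPMF {Ω : Type*} [Fintype Ω] (μ : Ω → ℝ) : Prop :=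
  (∀ ω, 0 ≤ μ ω) ∧ ∑ ω : Ω, μ ω = 1

section Basic

variable {Ω α β γ δ : Type*} [Fintype Ω] [DecidableEq α] [DecidableEq β] [DecidableEq γ]
  [DecidableEq δ]

/-- The law of the unconscious statistician. -/
lemma sum_pr_mul [Fintype α] (μ : Ω → ℝ) (X : Ω → α) (f : α → ℝ) :
    ∑ x, pr μ X x * f x = ∑ ω, μ ω * f (X ω) := by
  simp only [pr, Finset.sum_mul]
  rw [Finset.sum_comm]
  simp [ite_mul]

/-- Entropy as an expectation over the sample space, a form in which relabelling the values of `X`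
has no effect. -/
lemma ent_eq [Fintype α] (μ : Ω → ℝ) (X : Ω → α) :
    ent μ X = -∑ ω, μ ω * Real.log (pr μ X (X ω)) := by
  rw [ent, sum_pr_mul μ X (fun x => Real.log (pr μ X x))]

/-- Entropy depends only on the partition of the sample space into the level sets of `X`. -/
lemma ent_congr [Fintype α] [Fintype β] (μ : Ω → ℝ) (X : Ω → α) (Y : Ω → β)
    (h : ∀ ω ω', X ω = X ω' ↔ Y ω = Y ω') : ent μ X = ent μ Y := by
  simp only [ent_eq, pr, h]

lemma pr_nonneg {μ : Ω → ℝ} (hμ : ∀ ω, 0 ≤ μ ω) (X : Ω → α) (x : α) : 0 ≤ pr μ X x :=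
  Finset.sum_nonneg fun ω _ => by split_ifs <;> simp [hμ ω]

lemma le_pr {μ : Ω → ℝ} (hμ : ∀ ω, 0 ≤ μ ω) (X : Ω → α) (ω : Ω) : μ ω ≤ pr μ X (X ω) := by
  have h := Finset.single_le_sum (s := Finset.univ)
    (f := fun ω' => if X ω' = X ω then μ ω' else 0)
    (fun ω' _ => by split_ifs <;> simp [hμ ω']) (Finset.mem_univ ω)
  simpa [pr] using h

lemma sum_pr_pair [Fintype α] (μ : Ω → ℝ) (X : Ω → α) (Z : Ω → γ) (z : γ) :
    ∑ x, pr μ (fun ω => (X ω, Z ω)) (x, z) = pr μ Z z := by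
  simp only [pr, Prod.mk.injEq, ite_and]
  rw [Finset.sum_comm]
  simp

/-- With `q = p(x,z) p(y,z) / p(z)` the conditionally independent coupling, this is the
nonnegativity of the relative entropy of `p(x,y,z)` with respect to `q`. -/
lemma cmi_nonneg [Fintype α] [Fintype β] [Fintype γ] {μ : Ω → ℝ} (hμ : IsPMF μ)
    (X : Ω → α) (Y : Ω → β) (Z : Ω → γ) : 0 ≤ cmi μ X Y Z := by
  obtain ⟨h0, h1⟩ := hμ
  set p := pr μ (fun ω => (X ω, Y ω, Z ω)) with hp
  set a := pr μ (fun ω => (X ω, Z ω)) with ha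
  set b := pr μ (fun ω => (Y ω, Z ω)) with hb
  set c := pr μ Z with hc
  let g : α × β × γ → ℝ := fun w =>
    a (w.1, w.2.2) * b (w.2.1, w.2.2) / (c w.2.2 * p w)
  have hpoint : ∀ ω, μ ω * (1 - g (X ω, Y ω, Z ω)) ≤
      μ ω * (Real.log (p (X ω, Y ω, Z ω)) + Real.log (c (Z ω))
        - Real.log (a (X ω, Z ω)) - Real.log (b (Y ω, Z ω))) := by
    intro ω
    rcases (h0 ω).eq_or_lt with h | h
    · simp [← h]
    have hp' : 0 < p (X ω, Y ω, Z ω) := h.trans_le (le_pr h0 (fun ω => (X ω, Y ω, Z ω)) ω)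
    have ha' : 0 < a (X ω, Z ω) := h.trans_le (le_pr h0 (fun ω => (X ω, Z ω)) ω)
    have hb' : 0 < b (Y ω, Z ω) := h.trans_le (le_pr h0 (fun ω => (Y ω, Z ω)) ω)
    have hc' : 0 < c (Z ω) := h.trans_le (le_pr h0 Z ω)
    have hg : 0 < g (X ω, Y ω, Z ω) := by simp only [g]; positivity
    have hlog := Real.log_le_sub_one_of_pos hg
    have e : Real.log (g (X ω, Y ω, Z ω)) = Real.log (a (X ω, Z ω)) + Real.log (b (Y ω, Z ω))
        - (Real.log (c (Z ω)) + Real.log (p (X ω, Y ω, Z ω))) := by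
      simp only [g]
      rw [Real.log_div (by positivity) (by positivity), Real.log_mul ha'.ne' hb'.ne',
        Real.log_mul hc'.ne' hp'.ne']
    exact mul_le_mul_of_nonneg_left (by linarith) h.le
  have hcmi : cmi μ X Y Z = ∑ ω, μ ω * (Real.log (p (X ω, Y ω, Z ω)) + Real.log (c (Z ω))
        - Real.log (a (X ω, Z ω)) - Real.log (b (Y ω, Z ω))) := by
    simp only [cmi, ent_eq, mul_sub, mul_add, Finset.sum_sub_distrib, Finset.sum_add_distrib,
      ← hp, ← ha, ← hb, ← hc]
    ring
  have hmass : ∑ ω, μ ω * g (X ω, Y ω, Z ω) ≤ 1 := by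
    rw [← sum_pr_mul μ (fun ω => (X ω, Y ω, Z ω)) g, ← hp]
    calc ∑ w, p w * g w
        ≤ ∑ w : α × β × γ, a (w.1, w.2.2) * b (w.2.1, w.2.2) / c w.2.2 := by
          refine Finset.sum_le_sum fun w _ => ?_
          have ha' : 0 ≤ a (w.1, w.2.2) := pr_nonneg h0 _ _
          have hb' : 0 ≤ b (w.2.1, w.2.2) := pr_nonneg h0 _ _
          have hc' : 0 ≤ c w.2.2 := pr_nonneg h0 _ _
          -- Equality fails only outside the support of `p`, where `g w` is `0` by convention.
          by_cases hw : p w = 0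
          · rw [hw, zero_mul]; positivity
          · apply le_of_eq
            simp only [g]
            rw [← div_div, mul_div_cancel₀ _ hw]
      _ = ∑ z, (∑ x, a (x, z)) * (∑ y, b (y, z)) / c z := by
          simp only [Fintype.sum_prod_type, Finset.sum_mul_sum, Finset.sum_div]
          rw [Finset.sum_comm_cycle, Finset.sum_congr rfl fun z _ => Finset.sum_comm]
      _ = ∑ z, c z := by
          refine Finset.sum_congr rfl fun z _ => ?_
          rw [ha, hb, sum_pr_pair, sum_pr_pair, ← hc, mul_self_div_self]
      _ = 1 := by
          have h := sum_pr_mul μ Z (fun _ => 1)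
          simp only [mul_one] at h
          rw [hc, h, h1]
  rw [hcmi]
  refine le_trans ?_ (Finset.sum_le_sum fun ω _ => hpoint ω)
  simp only [mul_sub, mul_one, Finset.sum_sub_distrib, h1]
  linarith

end Basic

section ChainRule

variable {Ω A B C D E : Type*} [Fintype Ω]
  [Fintype A] [DecidableEq A] [Fintype B] [DecidableEq B] [Fintype C] [DecidableEq C]
  [Fintype D] [DecidableEq D] [Fintype E] [DecidableEq E]

/-- The two chain-rule expansions of `I(Y; X₁,X₂,U)`, equated. -/
lemma mi_add_cmi (μ : Ω → ℝ) (U : Ω → A) (X1 : Ω → B) (X2 : Ω → C) (Y : Ω → D) :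
    mi μ Y (fun ω => (X2 ω, U ω)) + cmi μ X1 Y (fun ω => (X2 ω, U ω)) =
      mi μ Y (fun ω => (X1 ω, X2 ω)) + cmi μ U Y (fun ω => (X1 ω, X2 ω)) := by
  have e1 : ent μ (fun ω => (X1 ω, X2 ω, U ω)) = ent μ (fun ω => (U ω, X1 ω, X2 ω)) :=
    ent_congr _ _ _ (by intros; simp only [Prod.mk.injEq]; tauto)
  have e2 : ent μ (fun ω => (X1 ω, Y ω, X2 ω, U ω)) = ent μ (fun ω => (U ω, Y ω, X1 ω, X2 ω)) :=
    ent_congr _ _ _ (by intros; simp only [Prod.mk.injEq]; tauto)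
  simp only [mi, cmi]
  linarith

/-- Chain rule: `I(U; Y₁,Y₂ | X) = I(U; Y₂ | X) + I(U; Y₁ | Y₂,X)`. -/
lemma cmi_pair (μ : Ω → ℝ) (U : Ω → A) (Y1 : Ω → D) (Y2 : Ω → E) (X : Ω → B) :
    cmi μ U (fun ω => (Y1 ω, Y2 ω)) X = cmi μ U Y2 X + cmi μ U Y1 (fun ω => (Y2 ω, X ω)) := by
  have e1 : ent μ (fun ω => ((Y1 ω, Y2 ω), X ω)) = ent μ (fun ω => (Y1 ω, Y2 ω, X ω)) :=
    ent_congr _ _ _ (by intros; simp only [Prod.mk.injEq]; tauto)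
  have e2 : ent μ (fun ω => (U ω, (Y1 ω, Y2 ω), X ω)) = ent μ (fun ω => (U ω, Y1 ω, Y2 ω, X ω)) :=
    ent_congr _ _ _ (by intros; simp only [Prod.mk.injEq]; tauto)
  simp only [cmi]
  linarith

end ChainRule

/-- under the Markov chain `U − (X₁,X₂) − (Y₁,Y₂)`, the 'very strong
interference' conditions imply the 'better cognitive decoding' condition. -/
theorem stmt_7 {Ω A B C D E : Type*} [Fintype Ω]
    [Fintype A] [DecidableEq A] [Fintype B] [DecidableEq B]
    [Fintype C] [DecidableEq C] [Fintype D] [DecidableEq D]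
    [Fintype E] [DecidableEq E]
    (μ : Ω → ℝ) (hμ : IsPMF μ)
    (U : Ω → A) (X1 : Ω → B) (X2 : Ω → C) (Y1 : Ω → D) (Y2 : Ω → E)
    (hMarkov : cmi μ U (fun ω => (Y1 ω, Y2 ω)) (fun ω => (X1 ω, X2 ω)) = 0)
    (h1 : cmi μ X1 Y1 (fun ω => (X2 ω, U ω)) ≤ cmi μ X1 Y2 (fun ω => (X2 ω, U ω)))
    (h2 : mi μ Y2 (fun ω => (X1 ω, X2 ω)) ≤ mi μ Y1 (fun ω => (X1 ω, X2 ω))) :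
    mi μ Y1 (fun ω => (X2 ω, U ω)) ≥ mi μ Y2 (fun ω => (X2 ω, U ω)) := by
  have c1 := mi_add_cmi μ U X1 X2 Y1
  have c2 := mi_add_cmi μ U X1 X2 Y2
  have n1 := cmi_nonneg hμ U Y1 (fun ω => (X1 ω, X2 ω))
  have n2 := cmi_nonneg hμ U Y1 (fun ω => (Y2 ω, X1 ω, X2 ω))
  have c3 := cmi_pair μ U Y1 Y2 (fun ω => (X1 ω, X2 ω))
  linarith

end CIFC
end

section
/- Let W, V₁₁, V₁₂, V₂₁, Y₁ be finite-valued random variables on a common probability space such that V₁₁ and V₁₂ are conditionally independent given W, i.e., I(V₁₁;V₁₂|W) = 0. Then I((Y₁,V₁₂);(V₁₁,V₂₁)|W) + I(V₁₁;V₂₁|W) = I(Y₁;(V₁₁,V₂₁)|(V₁₂,W)) + I((V₁₁,V₁₂);V₂₁|W). -/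
/-!
Write every term as a combination of joint entropies, which depend only on the joint law and
hence are unchanged when the components of a tuple are regrouped or permuted
(`ent_comp_equiv`). By the chain rule, both sides then share all joint entropies except for
those in `H(V₁₁,W) + H(V₁₂,W) - H(V₁₁,V₁₂,W) - H(W) = I(V₁₁;V₁₂|W)`: the left side exceeds the
right side by exactly this quantity, which vanishes by conditional independence.
-/

open BigOperators Finset

namespace CIFC

/-- Entropy is invariant under relabelling the values of a random variable by a bijection. -/
theorem ent_comp_equiv {Ω α β : Type*} [Fintype Ω] [Fintype α] [DecidableEq α]
    [Fintype β] [DecidableEq β] (μ : Ω → ℝ) (X : Ω → α) (e : α ≃ β) :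
    ent μ (fun ω => e (X ω)) = ent μ X := by
  unfold ent
  rw [← Equiv.sum_comp e]
  simp [pr]

/-- if `V₁₁` and `V₁₂` are conditionally independent given `W`, then
`I((Y₁,V₁₂);(V₁₁,V₂₁)|W) + I(V₁₁;V₂₁|W) =
I(Y₁;(V₁₁,V₂₁)|(V₁₂,W)) + I((V₁₁,V₁₂);V₂₁|W)`. -/
theorem stmt_17 {Ω A B C D E : Type*} [Fintype Ω]
    [Fintype A] [DecidableEq A] [Fintype B] [DecidableEq B]
    [Fintype C] [DecidableEq C] [Fintype D] [DecidableEq D]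
    [Fintype E] [DecidableEq E]
    (μ : Ω → ℝ) (hμ : IsPMF μ)
    (W : Ω → A) (V11 : Ω → B) (V12 : Ω → C) (V21 : Ω → D) (Y1 : Ω → E)
    (hCondIndep : cmi μ V11 V12 W = 0) :
    cmi μ (fun ω => (Y1 ω, V12 ω)) (fun ω => (V11 ω, V21 ω)) W + cmi μ V11 V21 W =
      cmi μ Y1 (fun ω => (V11 ω, V21 ω)) (fun ω => (V12 ω, W ω)) +
        cmi μ (fun ω => (V11 ω, V12 ω)) V21 W := by
  have h1 : ent μ (fun ω => ((Y1 ω, V12 ω), W ω)) = ent μ (fun ω => (Y1 ω, V12 ω, W ω)) :=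
    (ent_comp_equiv μ _ (Equiv.prodAssoc E C A)).symm
  have h2 : ent μ (fun ω => ((V11 ω, V12 ω), W ω)) = ent μ (fun ω => (V11 ω, V12 ω, W ω)) :=
    (ent_comp_equiv μ _ (Equiv.prodAssoc B C A)).symm
  have h3 : ent μ (fun ω => ((V11 ω, V21 ω), V12 ω, W ω)) =
      ent μ (fun ω => ((V11 ω, V12 ω), V21 ω, W ω)) :=
    (ent_comp_equiv μ _ (Equiv.prodProdProdComm B D C A)).symm
  have h4 : ent μ (fun ω => ((Y1 ω, V12 ω), (V11 ω, V21 ω), W ω)) =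
      ent μ (fun ω => (Y1 ω, (V11 ω, V21 ω), V12 ω, W ω)) :=
    (ent_comp_equiv μ _ ((Equiv.prodAssoc E C _).trans
      ((Equiv.refl E).prodCongr
        ((Equiv.prodAssoc C (B × D) A).symm.trans
          (((Equiv.prodComm C (B × D)).prodCongr (Equiv.refl A)).trans
            (Equiv.prodAssoc (B × D) C A)))))).symm
  have h5 : ent μ (fun ω => ((V11 ω, V21 ω), W ω)) = ent μ (fun ω => (V11 ω, V21 ω, W ω)) :=
    (ent_comp_equiv μ _ (Equiv.prodAssoc B D A)).symm
  unfold cmi at hCondIndep ⊢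
  beta_reduce at hCondIndep ⊢
  linarith

end CIFC
end
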